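/- Let X_1, X_2, … be identically distributed random variables in a sub-linear expectation space whose upper capacity 𝕍 is continuous, and suppose they are extended negatively dependent under the conjugate expectation ℰ (i.e., ℰ[∏_{i=1}^n g_i(X_i)] ≤ K·∏_{i=1}^n ℰ[g_i(X_i)] for some K ≥ 1, every n, and all non-negative bounded Lipschitz g_i that are either all non-decreasing or all non-increasing). Set S_n = Σ_{k=1}^n X_k. If 𝕍( limsup_{n→∞} |S_n|/n = +∞ ) < 1, then C_𝕍(|X_1|) < ∞. -/

import Mathlib

open Filter MeasureTheory
open scoped ENNReal NNReal

noncomputable section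

/-- A sub-linear expectation on `Ω`: a monotone, constant-preserving, sub-additive,
positively homogeneous functional on real random variables (with values in the
extended reals, so that random variables without a finite expectation are allowed). -/
structure SublinearExp (Ω : Type) where
  E : (Ω → ℝ) → EReal
  mono : ∀ X Y : Ω → ℝ, (∀ ω, X ω ≤ Y ω) → E X ≤ E Y
  const_eq : ∀ c : ℝ, E (fun _ => c) = (c : EReal)
  subadd : ∀ X Y : Ω → ℝ, E (fun ω => X ω + Y ω) ≤ E X + E Y
  pos_homog : ∀ lam : ℝ, 0 ≤ lam → ∀ X : Ω → ℝ,
    E (fun ω => lam * X ω) = (lam : EReal) * E X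

namespace SublinearExp

variable {Ω : Type}

/-- The conjugate expectation `ℰ[X] := −𝔼[−X]`. -/
def cE (SL : SublinearExp Ω) (X : Ω → ℝ) : EReal := - SL.E fun ω => - X ω

/-- The upper capacity `𝕍(A) := inf{𝔼[ξ] : 1_A ≤ ξ}`. -/
def V (SL : SublinearExp Ω) (A : Set Ω) : ℝ :=
  sInf {x : ℝ | ∃ ξ : Ω → ℝ,
    (∀ ω, A.indicator (fun _ => (1 : ℝ)) ω ≤ ξ ω) ∧ SL.E ξ = (x : EReal)}

/-- The lower capacity `𝓋(A) := 1 − 𝕍(Aᶜ)`. -/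
def vLow (SL : SublinearExp Ω) (A : Set Ω) : ℝ := 1 - SL.V Aᶜ

/-- The Choquet integral `C_𝕍(X) := ∫₀^∞ 𝕍(X ≥ t) dt` (of a non-negative r.v.). -/
def Choquet (SL : SublinearExp Ω) (X : Ω → ℝ) : ℝ≥0∞ :=
  ∫⁻ t in Set.Ioi (0 : ℝ), ENNReal.ofReal (SL.V {ω | t ≤ X ω})

/-- The outer capacity `𝕍*(A) := inf{Σ_n 𝕍(A_n) : A ⊆ ∪_n A_n}`. -/
def Vout (SL : SublinearExp Ω) (A : Set Ω) : ℝ≥0∞ :=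
  ⨅ (B : ℕ → Set Ω) (_ : A ⊆ ⋃ n, B n), ∑' n, ENNReal.ofReal (SL.V (B n))

/-- The upper capacity is continuous: continuous from below and from above. -/
def ContinuousCapacity (SL : SublinearExp Ω) : Prop :=
  (∀ A : ℕ → Set Ω, Monotone A →
    Tendsto (fun n => SL.V (A n)) atTop (nhds (SL.V (⋃ n, A n)))) ∧
  (∀ A : ℕ → Set Ω, Antitone A →
    Tendsto (fun n => SL.V (A n)) atTop (nhds (SL.V (⋂ n, A n))))

/-- Bounded Lipschitz function on ℝ. -/
def IsBLip (g : ℝ → ℝ) : Prop :=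
  (∃ L : NNReal, LipschitzWith L g) ∧ ∃ M : ℝ, ∀ x, |g x| ≤ M

/-- Local Lipschitz function on ℝ: `|φ(x) − φ(y)| ≤ C(1+|x|^m+|y|^m)|x−y|`. -/
def IsLocLip (φ : ℝ → ℝ) : Prop :=
  ∃ (C : ℝ) (m : ℕ), ∀ x y : ℝ, |φ x - φ y| ≤ C * (1 + |x| ^ m + |y| ^ m) * |x - y|

/-- Upper extended negative dependence (finite family) with dominating constant `K`:
`𝔼[∏ g_i(X_i)] ≤ K ∏ 𝔼[g_i(X_i)]` for all non-negative bounded Lipschitz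
non-decreasing `g_i`.  (Expectations of bounded functions are finite, whence
the `toReal`.) -/
def UENDFin (SL : SublinearExp Ω) (K : ℝ) {n : ℕ} (X : Fin n → Ω → ℝ) : Prop :=
  ∀ g : Fin n → ℝ → ℝ, (∀ i, IsBLip (g i)) → (∀ i, Monotone (g i)) →
    (∀ i x, 0 ≤ g i x) →
    SL.E (fun ω => ∏ i, g i (X i ω)) ≤
      ((K * ∏ i, (SL.E fun ω => g i (X i ω)).toReal : ℝ) : EReal)

/-- Upper extended negative dependence for a sequence. -/
def UEND (SL : SublinearExp Ω) (K : ℝ) (X : ℕ → Ω → ℝ) : Prop :=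
  ∀ n : ℕ, ∀ g : ℕ → ℝ → ℝ, (∀ i, IsBLip (g i)) → (∀ i, Monotone (g i)) →
    (∀ i x, 0 ≤ g i x) →
    SL.E (fun ω => ∏ i ∈ Finset.range n, g i (X i ω)) ≤
      ((K * ∏ i ∈ Finset.range n, (SL.E fun ω => g i (X i ω)).toReal : ℝ) : EReal)

/-- Lower extended negative dependence for a sequence. -/
def LEND (SL : SublinearExp Ω) (K : ℝ) (X : ℕ → Ω → ℝ) : Prop :=
  ∀ n : ℕ, ∀ g : ℕ → ℝ → ℝ, (∀ i, IsBLip (g i)) → (∀ i, Antitone (g i)) →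
    (∀ i x, 0 ≤ g i x) →
    SL.E (fun ω => ∏ i ∈ Finset.range n, g i (X i ω)) ≤
      ((K * ∏ i ∈ Finset.range n, (SL.E fun ω => g i (X i ω)).toReal : ℝ) : EReal)

/-- Extended negative dependence = upper and lower END. -/
def END (SL : SublinearExp Ω) (K : ℝ) (X : ℕ → Ω → ℝ) : Prop :=
  UEND SL K X ∧ LEND SL K X

/-- Upper extended negative dependence under the conjugate expectation `ℰ`
(finite family). -/
def UENDFinConj (SL : SublinearExp Ω) (K : ℝ) {n : ℕ} (X : Fin n → Ω → ℝ) : Prop :=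
  ∀ g : Fin n → ℝ → ℝ, (∀ i, IsBLip (g i)) → (∀ i, Monotone (g i)) →
    (∀ i x, 0 ≤ g i x) →
    SL.cE (fun ω => ∏ i, g i (X i ω)) ≤
      ((K * ∏ i, (SL.cE fun ω => g i (X i ω)).toReal : ℝ) : EReal)

/-- Upper extended negative dependence under the conjugate expectation (sequence). -/
def UENDconj (SL : SublinearExp Ω) (K : ℝ) (X : ℕ → Ω → ℝ) : Prop :=
  ∀ n : ℕ, ∀ g : ℕ → ℝ → ℝ, (∀ i, IsBLip (g i)) → (∀ i, Monotone (g i)) →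
    (∀ i x, 0 ≤ g i x) →
    SL.cE (fun ω => ∏ i ∈ Finset.range n, g i (X i ω)) ≤
      ((K * ∏ i ∈ Finset.range n, (SL.cE fun ω => g i (X i ω)).toReal : ℝ) : EReal)

/-- Lower extended negative dependence under the conjugate expectation (sequence). -/
def LENDconj (SL : SublinearExp Ω) (K : ℝ) (X : ℕ → Ω → ℝ) : Prop :=
  ∀ n : ℕ, ∀ g : ℕ → ℝ → ℝ, (∀ i, IsBLip (g i)) → (∀ i, Antitone (g i)) →
    (∀ i x, 0 ≤ g i x) →
    SL.cE (fun ω => ∏ i ∈ Finset.range n, g i (X i ω)) ≤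
      ((K * ∏ i ∈ Finset.range n, (SL.cE fun ω => g i (X i ω)).toReal : ℝ) : EReal)

/-- Extended negative dependence under the conjugate expectation. -/
def ENDconj (SL : SublinearExp Ω) (K : ℝ) (X : ℕ → Ω → ℝ) : Prop :=
  UENDconj SL K X ∧ LENDconj SL K X

/-- Extended independence of a sequence:
`𝔼[∏ ψ_i(X_i)] = ∏ 𝔼[ψ_i(X_i)]` for non-negative local Lipschitz `ψ_i`,
whenever the expectations involved are finite. -/
def ExtIndep (SL : SublinearExp Ω) (X : ℕ → Ω → ℝ) : Prop :=
  ∀ n : ℕ, ∀ ψ : ℕ → ℝ → ℝ, (∀ i, IsLocLip (ψ i)) → (∀ i x, 0 ≤ ψ i x) →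
    (∀ i ∈ Finset.range n, SL.E (fun ω => ψ i (X i ω)) ≠ ⊤) →
    SL.E (fun ω => ∏ i ∈ Finset.range n, ψ i (X i ω)) =
      ((∏ i ∈ Finset.range n, (SL.E fun ω => ψ i (X i ω)).toReal : ℝ) : EReal)

/-- Extended independence of two random variables. -/
def ExtIndepPair (SL : SublinearExp Ω) (Y Z : Ω → ℝ) : Prop :=
  ∀ ψ₁ ψ₂ : ℝ → ℝ, IsLocLip ψ₁ → IsLocLip ψ₂ →
    (∀ x, 0 ≤ ψ₁ x) → (∀ x, 0 ≤ ψ₂ x) →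
    SL.E (fun ω => ψ₁ (Y ω)) ≠ ⊤ → SL.E (fun ω => ψ₂ (Z ω)) ≠ ⊤ →
    SL.E (fun ω => ψ₁ (Y ω) * ψ₂ (Z ω)) =
      (((SL.E fun ω => ψ₁ (Y ω)).toReal * (SL.E fun ω => ψ₂ (Z ω)).toReal : ℝ) : EReal)

/-- Identically distributed: `𝔼[φ(X_i)] = 𝔼[φ(X_1)]` for all local Lipschitz `φ`. -/
def IdentDist (SL : SublinearExp Ω) (X : ℕ → Ω → ℝ) : Prop :=
  ∀ (i : ℕ) (φ : ℝ → ℝ), IsLocLip φ →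
    SL.E (fun ω => φ (X i ω)) = SL.E fun ω => φ (X 0 ω)

end SublinearExp

/-- `log x = ln(x ∨ e)`. -/
def paperLog (x : ℝ) : ℝ := Real.log (max x (Real.exp 1))

/-- `a_n = √(2 n log log n)` with the above convention for `log`. -/
def lilA (n : ℕ) : ℝ := Real.sqrt (2 * n * paperLog (paperLog n))

/-!
If `S_n = O(n)` then `X_n = S_{n+1} - S_n = O(n)`, so it suffices to show that a one-sided Choquet
integral being infinite forces `X_n` to be of larger order than `n` on a set of capacity one; for
`|X_1|` one adds the bounds for `X_1` and `-X_1`. An infinite Choquet integral makes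
`∑ 𝕍(X_1 ≥ M n)` diverge for every `M > 0`, and the second Borel–Cantelli lemma applies: for
non-decreasing Lipschitz `f_i` with values in `[0, 1]`, negative dependence of the `1 - f_i(X_i)`
under `ℰ` gives
`1 - 𝕍(⋃ {f_i(X_i) > 0}) ≤ ℰ[∏ (1 - f_i(X_i))] ≤ K ∏ (1 - 𝔼[f_i(X_i)]) ≤ K exp(-∑ 𝔼[f_i(X_i)])`.
Taking for `f_i` a Lipschitz approximation of the indicator of `[M i, ∞)` compares
`𝔼[f_i(X_i)] = 𝔼[f_i(X_1)]` with `𝕍(X_1 ≥ M i)`, and continuity of `𝕍` from above passes to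
the intersection over all tails and all `M`.
-/

theorem limsup_norm_sum_range_div_eq_top {G : Type*} [SeminormedAddCommGroup G] {x : ℕ → G}
    (h : ¬ x =O[atTop] fun n : ℕ => (n : ℝ)) :
    limsup (fun n : ℕ => ((‖∑ k ∈ Finset.range n, x k‖ / n : ℝ) : EReal)) atTop = ⊤ := by
  contrapose! h
  obtain ⟨c, hc, -⟩ := EReal.lt_iff_exists_real_btwn.1 (lt_top_iff_ne_top.2 h)
  have hsum : (fun n : ℕ => ∑ k ∈ Finset.range n, x k) =O[atTop] fun n : ℕ => (n : ℝ) := by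
    refine .of_bound c ?_
    filter_upwards [eventually_lt_of_limsup_lt hc, eventually_gt_atTop 0] with n hn hpos
    rw [EReal.coe_lt_coe_iff, div_lt_iff₀ (Nat.cast_pos.2 hpos)] at hn
    simpa using hn.le
  have hsucc : (fun n : ℕ => ((n + 1 : ℕ) : ℝ)) =O[atTop] fun n : ℕ => (n : ℝ) := by
    refine .of_bound 2 ?_
    filter_upwards [eventually_ge_atTop 1] with n hn
    rw [Real.norm_natCast, Real.norm_natCast]
    exact_mod_cast (by omega : n + 1 ≤ 2 * n)
  have hshift := (hsum.comp_tendsto (tendsto_add_atTop_nat 1)).trans hsucc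
  simpa [Function.comp_def, Finset.sum_range_succ] using hshift.sub hsum

theorem not_isBigO_natCast_of_frequently_lt {x : ℕ → ℝ}
    (h : ∀ M : ℕ, ∃ᶠ n : ℕ in atTop, ((M : ℝ) + 1) * n - 1 < x n) :
    ¬ x =O[atTop] fun n : ℕ => (n : ℝ) := by
  intro hO
  obtain ⟨c, hc⟩ := hO.bound
  obtain ⟨M, hM⟩ := exists_nat_ge c
  obtain ⟨n, hlt, hle, hn⟩ := ((h M).and_eventually (hc.and (eventually_ge_atTop 1))).exists
  have hn' : (1 : ℝ) ≤ n := Nat.one_le_cast.2 hn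
  have hxn : x n ≤ M * n :=
    calc x n ≤ ‖x n‖ := Real.le_norm_self _
      _ ≤ c * n := by simpa using hle
      _ ≤ M * n := by gcongr
  linarith

theorem lintegral_Ici_le_tsum_of_antitoneOn {φ : ℝ → ℝ≥0∞} {u : ℕ → ℝ}
    (hu : ∀ i, u 0 ≤ u i) (hunb : ¬ BddAbove (Set.range u)) (hφ : AntitoneOn φ (Set.Ici (u 0))) :
    ∫⁻ t in Set.Ici (u 0), φ t ≤ ∑' i, φ (u i) * ENNReal.ofReal (u (i + 1) - u i) :=
  calc ∫⁻ t in Set.Ici (u 0), φ t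
      = ∫⁻ t in ⋃ i, Set.Ico (u i) (u (i + 1)), φ t :=
        congrArg (fun s => ∫⁻ t in s, φ t) (iUnion_Ico_map_succ_eq_Ici hu hunb).symm
    _ ≤ ∑' i, ∫⁻ t in Set.Ico (u i) (u (i + 1)), φ t := lintegral_iUnion_le _ _
    _ ≤ ∑' i, ∫⁻ _ in Set.Ico (u i) (u (i + 1)), φ (u i) :=
        ENNReal.tsum_le_tsum fun i => setLIntegral_mono measurable_const fun t ht =>
          hφ (hu i) ((hu i).trans ht.1) ht.1
    _ = ∑' i, φ (u i) * ENNReal.ofReal (u (i + 1) - u i) := by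
        simp only [setLIntegral_const, Real.volume_Ico]

namespace SublinearExp

variable {Ω : Type} (SL : SublinearExp Ω)

section Expectation

theorem coe_toReal_E {X : Ω → ℝ} {a b : ℝ} (hX : ∀ ω, X ω ∈ Set.Icc a b) :
    ((SL.E X).toReal : EReal) = SL.E X := by
  have hle : SL.E X ≤ b := SL.const_eq b ▸ SL.mono X (fun _ => b) fun ω => (hX ω).2
  have hge : a ≤ SL.E X := SL.const_eq a ▸ SL.mono (fun _ => a) X fun ω => (hX ω).1
  exact EReal.coe_toReal (ne_top_of_le_ne_top (EReal.coe_ne_top b) hle)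
    (ne_bot_of_le_ne_bot (EReal.coe_ne_bot a) hge)

theorem toReal_E_mem_Icc {X : Ω → ℝ} {a b : ℝ} (hX : ∀ ω, X ω ∈ Set.Icc a b) :
    (SL.E X).toReal ∈ Set.Icc a b := by
  rw [Set.mem_Icc, ← EReal.coe_le_coe_iff, ← EReal.coe_le_coe_iff, SL.coe_toReal_E hX,
    ← SL.const_eq, ← SL.const_eq]
  exact ⟨SL.mono _ _ fun ω => (hX ω).1, SL.mono _ _ fun ω => (hX ω).2⟩

theorem E_add_const (X : Ω → ℝ) (c : ℝ) : SL.E (fun ω => X ω + c) = SL.E X + c := by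
  refine le_antisymm (SL.const_eq c ▸ SL.subadd X fun _ => c) (EReal.add_le_of_le_sub ?_)
  have hsub := SL.subadd (fun ω => X ω + c) fun _ => -c
  simpa only [add_neg_cancel_right, SL.const_eq, EReal.coe_neg, sub_eq_add_neg] using hsub

theorem cE_mono {X Y : Ω → ℝ} (h : ∀ ω, X ω ≤ Y ω) : SL.cE X ≤ SL.cE Y :=
  EReal.neg_le_neg_iff.2 (SL.mono _ _ fun ω => neg_le_neg (h ω))

theorem cE_const (c : ℝ) : SL.cE (fun _ => c) = c := by
  rw [cE, SL.const_eq, EReal.coe_neg, neg_neg]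

theorem cE_const_sub (c : ℝ) (X : Ω → ℝ) : SL.cE (fun ω => c - X ω) = c - SL.E X := by
  have hneg : (fun ω => -(c - X ω)) = fun ω => X ω + -c := by
    funext ω
    ring
  rw [cE, hneg, E_add_const, EReal.neg_add (by simp) (by simp), EReal.coe_neg, sub_eq_add_neg,
    neg_neg, add_comm, ← sub_eq_add_neg]

theorem toReal_cE_one_sub {X : Ω → ℝ} (hX : ∀ ω, X ω ∈ Set.Icc 0 1) :
    (SL.cE fun ω => 1 - X ω).toReal = 1 - (SL.E X).toReal := by
  rw [cE_const_sub, ← SL.coe_toReal_E hX, ← EReal.coe_sub, EReal.toReal_coe, EReal.toReal_coe]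

end Expectation

section Capacity

theorem indicator_one_mem_Icc (A : Set Ω) (ω : Ω) :
    A.indicator (fun _ => (1 : ℝ)) ω ∈ Set.Icc 0 1 :=
  ⟨Set.indicator_nonneg (fun _ _ => zero_le_one) ω,
    Set.indicator_le_self' (fun _ _ => zero_le_one) ω⟩

theorem V_eq_toReal_E (A : Set Ω) : SL.V A = (SL.E (A.indicator fun _ => 1)).toReal := by
  have hE := SL.coe_toReal_E (indicator_one_mem_Icc A)
  refine IsLeast.csInf_eq ⟨⟨_, fun _ => le_rfl, hE.symm⟩, ?_⟩
  rintro x ⟨ξ, hξ, hx⟩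
  rw [← EReal.coe_le_coe_iff, hE, ← hx]
  exact SL.mono _ _ hξ

theorem coe_V (A : Set Ω) : (SL.V A : EReal) = SL.E (A.indicator fun _ => 1) := by
  rw [V_eq_toReal_E, SL.coe_toReal_E (indicator_one_mem_Icc A)]

theorem V_nonneg (A : Set Ω) : 0 ≤ SL.V A :=
  SL.V_eq_toReal_E A ▸ (SL.toReal_E_mem_Icc (indicator_one_mem_Icc A)).1

theorem V_le_one (A : Set Ω) : SL.V A ≤ 1 :=
  SL.V_eq_toReal_E A ▸ (SL.toReal_E_mem_Icc (indicator_one_mem_Icc A)).2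

theorem V_mono {A B : Set Ω} (h : A ⊆ B) : SL.V A ≤ SL.V B := by
  rw [← EReal.coe_le_coe_iff, coe_V, coe_V]
  exact SL.mono _ _ fun ω => Set.indicator_le_indicator_of_subset h (fun _ => zero_le_one) ω

theorem V_union_le (A B : Set Ω) : SL.V (A ∪ B) ≤ SL.V A + SL.V B := by
  rw [← EReal.coe_le_coe_iff, EReal.coe_add, coe_V, coe_V, coe_V]
  refine (SL.mono _ _ fun ω => ?_).trans (SL.subadd _ _)
  by_cases hA : ω ∈ A <;> by_cases hB : ω ∈ B <;> simp [hA, hB]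

theorem coe_vLow (A : Set Ω) : (SL.vLow A : EReal) = SL.cE (A.indicator fun _ => 1) := by
  have hcompl : A.indicator (fun _ => (1 : ℝ)) = fun ω => 1 - Aᶜ.indicator (fun _ => 1) ω := by
    funext ω
    by_cases hA : ω ∈ A <;> simp [hA]
  rw [hcompl, cE_const_sub, ← coe_V, vLow, EReal.coe_sub]

theorem vLow_mono {A B : Set Ω} (h : A ⊆ B) : SL.vLow A ≤ SL.vLow B :=
  sub_le_sub_left (SL.V_mono (Set.compl_subset_compl.2 h)) 1

variable {SL}

theorem ContinuousCapacity.V_iInter_eq_one (hcont : SL.ContinuousCapacity) {A : ℕ → Set Ω}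
    (hA : Antitone A) (hone : ∀ n, SL.V (A n) = 1) : SL.V (⋂ n, A n) = 1 :=
  tendsto_nhds_unique (hcont.2 A hA) (by simp only [hone, tendsto_const_nhds])

theorem ContinuousCapacity.V_limsup_eq_one (hcont : SL.ContinuousCapacity) {A : ℕ → Set Ω}
    (hone : ∀ n, SL.V (⋃ i ≥ n, A i) = 1) : SL.V (limsup A atTop) = 1 := by
  rw [limsup_eq_iInf_iSup_of_nat]
  exact hcont.V_iInter_eq_one
    (fun n m hnm => Set.biUnion_subset_biUnion_left fun i hi => le_trans hnm hi) hone

end Capacity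

section Choquet

theorem antitone_ofReal_V_le (Z : Ω → ℝ) :
    Antitone fun t : ℝ => ENNReal.ofReal (SL.V {ω | t ≤ Z ω}) := fun _ _ hst =>
  ENNReal.ofReal_le_ofReal (SL.V_mono fun _ hω => le_trans hst hω)

theorem Choquet_ne_top_of_summable {Z : Ω → ℝ} {M : ℝ} (hM : 0 < M)
    (hsum : Summable fun i : ℕ => SL.V {ω | M * i ≤ Z ω}) : SL.Choquet Z ≠ ⊤ := by
  have hunb : ¬ BddAbove (Set.range fun i : ℕ => M * (i : ℝ)) :=
    not_bddAbove_of_tendsto_atTop (tendsto_natCast_atTop_atTop.const_mul_atTop hM)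
  have hle := lintegral_Ici_le_tsum_of_antitoneOn (fun i => by simpa using by positivity) hunb
    ((SL.antitone_ofReal_V_le Z).antitoneOn _)
  have hstep : ∀ i : ℕ, M * ((i + 1 : ℕ) : ℝ) - M * i = M := fun i => by
    push_cast
    ring
  simp only [hstep, ENNReal.tsum_mul_right, Nat.cast_zero, mul_zero] at hle
  exact ne_top_of_le_ne_top (ENNReal.mul_ne_top hsum.tsum_ofReal_ne_top ENNReal.ofReal_ne_top)
    ((lintegral_mono_set Set.Ioi_subset_Ici_self).trans hle)

theorem Choquet_abs_le (Z : Ω → ℝ) :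
    SL.Choquet (fun ω => |Z ω|) ≤ SL.Choquet Z + SL.Choquet fun ω => -Z ω := by
  unfold Choquet
  rw [← lintegral_add_left (SL.antitone_ofReal_V_le Z).measurable]
  refine lintegral_mono fun t => ?_
  rw [← ENNReal.ofReal_add (SL.V_nonneg _) (SL.V_nonneg _)]
  refine ENNReal.ofReal_le_ofReal ((SL.V_mono fun ω hω => ?_).trans (SL.V_union_le _ _))
  exact le_abs.1 (Set.mem_ofPred_eq ▸ hω)

end Choquet

section NegativeDependence

variable {SL} {K : ℝ} {X : ℕ → Ω → ℝ}

theorem IdentDist.neg (h : IdentDist SL X) : IdentDist SL fun i ω => -X i ω := by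
  rintro i φ ⟨C, m, hφ⟩
  refine h i (fun x => φ (-x)) ⟨C, m, fun x y => ?_⟩
  simpa [neg_add_eq_sub, abs_sub_comm] using hφ (-x) (-y)

theorem isLocLip_of_lipschitzWith {φ : ℝ → ℝ} {L : ℝ≥0} (h : LipschitzWith L φ) :
    IsLocLip φ := by
  refine ⟨L, 0, fun x y => ?_⟩
  have hle : |φ x - φ y| ≤ L * |x - y| := h.dist_le_mul x y
  have hnonneg : 0 ≤ L * |x - y| := by positivity
  simp only [pow_zero]
  linarith

theorem UENDconj.neg (h : UENDconj SL K X) : LENDconj SL K fun i ω => -X i ω := by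
  refine fun n g hg hanti h0 => h n (fun i x => g i (-x)) (fun i => ?_)
    (fun i x y hxy => hanti i (neg_le_neg hxy)) fun i x => h0 i (-x)
  obtain ⟨⟨L, hL⟩, M, hM⟩ := hg i
  exact ⟨⟨L * 1, hL.comp LipschitzWith.id.neg⟩, M, fun x => hM (-x)⟩

theorem LENDconj.one_le (h : LENDconj SL K X) : 1 ≤ K := by
  have hle := h 0 (fun _ _ => 0) (fun _ => ⟨⟨0, .const 0⟩, 0, by simp⟩) (fun _ => antitone_const)
    fun _ _ => le_rfl
  simp only [Finset.range_zero, Finset.prod_empty, mul_one, cE_const] at hle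
  exact EReal.coe_le_coe_iff.1 hle

theorem LENDconj.cE_prod_le (h : LENDconj SL K X) (s : Finset ℕ) {g : ℕ → ℝ → ℝ}
    (hg : ∀ i, IsBLip (g i)) (hanti : ∀ i, Antitone (g i)) (h0 : ∀ i x, 0 ≤ g i x) :
    SL.cE (fun ω => ∏ i ∈ s, g i (X i ω)) ≤
      ((K * ∏ i ∈ s, (SL.cE fun ω => g i (X i ω)).toReal : ℝ) : EReal) := by
  classical
  obtain ⟨n, hn⟩ := s.exists_nat_subset_range
  have hinter : Finset.range n ∩ s = s := Finset.inter_eq_right.2 hn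
  let gExt : ℕ → ℝ → ℝ := fun i => if i ∈ s then g i else fun _ => 1
  have hgExt : ∀ i, IsBLip (gExt i) ∧ Antitone (gExt i) ∧ ∀ x, 0 ≤ gExt i x := fun i => by
    by_cases hi : i ∈ s
    · simpa only [gExt, hi, if_true] using ⟨hg i, hanti i, h0 i⟩
    · simpa only [gExt, hi, if_false] using
        ⟨⟨⟨0, .const 1⟩, 1, by simp⟩, antitone_const, fun _ => zero_le_one⟩
  have hprod : ∀ ω, ∏ i ∈ Finset.range n, gExt i (X i ω) = ∏ i ∈ s, g i (X i ω) := fun ω => by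
    rw [← hinter, ← Finset.prod_ite_mem]
    exact Finset.prod_congr rfl fun i _ => by simp only [gExt]; split_ifs <;> rfl
  have hprodE : ∏ i ∈ Finset.range n, (SL.cE fun ω => gExt i (X i ω)).toReal =
      ∏ i ∈ s, (SL.cE fun ω => g i (X i ω)).toReal := by
    rw [← hinter, ← Finset.prod_ite_mem]
    refine Finset.prod_congr rfl fun i _ => ?_
    by_cases hi : i ∈ s <;> simp [gExt, hi, cE_const]
  simpa only [hprod, hprodE] using
    h n gExt (fun i => (hgExt i).1) (fun i => (hgExt i).2.1) fun i => (hgExt i).2.2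

/-- A non-decreasing Lipschitz approximation of the indicator of `[c, ∞)`, vanishing on
`(-∞, c - 1]`, with which the dependence and distribution hypotheses can be tested. -/
def ramp (c x : ℝ) : ℝ := max 0 (min 1 (x - c + 1))

theorem ramp_mem_Icc (c x : ℝ) : ramp c x ∈ Set.Icc 0 1 :=
  ⟨le_max_left _ _, max_le zero_le_one (min_le_left _ _)⟩

theorem monotone_ramp (c : ℝ) : Monotone (ramp c) := fun x y hxy => by
  unfold ramp
  gcongr

theorem lipschitzWith_ramp (c : ℝ) : LipschitzWith 1 (ramp c) := by
  have hshift : LipschitzWith 1 fun x : ℝ => x - c + 1 :=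
    .of_dist_le_mul fun x y => by simp
  exact (hshift.const_min 1).const_max 0

theorem ramp_eq_one {c x : ℝ} (h : c ≤ x) : ramp c x = 1 := by
  simp [ramp, h]

theorem ramp_pos_iff {c x : ℝ} : 0 < ramp c x ↔ c - 1 < x := by
  simp only [ramp, lt_max_iff, lt_min_iff, lt_irrefl, zero_lt_one, true_and, false_or]
  constructor <;> intro h <;> linarith

theorem IdentDist.V_le_toReal_E_ramp (h : IdentDist SL X) (i : ℕ) (c : ℝ) :
    SL.V {ω | c ≤ X 0 ω} ≤ (SL.E fun ω => ramp c (X i ω)).toReal := by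
  rw [h i _ (isLocLip_of_lipschitzWith (lipschitzWith_ramp c)), ← EReal.coe_le_coe_iff, coe_V,
    SL.coe_toReal_E fun ω => ramp_mem_Icc c (X 0 ω)]
  refine SL.mono _ _ (Set.indicator_le' (fun ω hω => ?_) fun ω _ => (ramp_mem_Icc c (X 0 ω)).1)
  exact (ramp_eq_one hω).ge

end NegativeDependence

section BorelCantelli

variable {SL} {K : ℝ} {X : ℕ → Ω → ℝ} {f : ℕ → ℝ → ℝ} {L : ℕ → ℝ≥0}

theorem LENDconj.vLow_le_exp (h : LENDconj SL K X) (hLip : ∀ i, LipschitzWith (L i) (f i))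
    (hmono : ∀ i, Monotone (f i)) (hf : ∀ i x, f i x ∈ Set.Icc 0 1) (s : Finset ℕ) :
    SL.vLow {ω | ∀ i ∈ s, f i (X i ω) = 0} ≤
      K * Real.exp (-∑ i ∈ s, (SL.E fun ω => f i (X i ω)).toReal) := by
  have h1f : ∀ i x, 1 - f i x ∈ Set.Icc 0 1 := fun i x =>
    ⟨sub_nonneg.2 (hf i x).2, sub_le_self _ (hf i x).1⟩
  have hvLow : (SL.vLow {ω | ∀ i ∈ s, f i (X i ω) = 0} : EReal) ≤
      SL.cE fun ω => ∏ i ∈ s, (1 - f i (X i ω)) := by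
    rw [coe_vLow]
    refine SL.cE_mono (Set.indicator_le' (fun ω hω => ?_) fun ω _ =>
      Finset.prod_nonneg fun i _ => (h1f i (X i ω)).1)
    exact (Finset.prod_eq_one fun i hi => by rw [hω i hi, sub_zero]).ge
  have hprod := h.cE_prod_le s (g := fun i x => 1 - f i x)
    (fun i => ⟨⟨_, (LipschitzWith.const 1).sub (hLip i)⟩, 1, fun x => by
      rw [abs_of_nonneg (h1f i x).1]
      exact (h1f i x).2⟩)
    (fun i x y hxy => sub_le_sub_left (hmono i hxy) 1) fun i x => (h1f i x).1
  have hp : ∀ i, (SL.E fun ω => f i (X i ω)).toReal ≤ 1 := fun i =>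
    (SL.toReal_E_mem_Icc fun ω => hf i (X i ω)).2
  calc SL.vLow {ω | ∀ i ∈ s, f i (X i ω) = 0}
      ≤ K * ∏ i ∈ s, (SL.cE fun ω => 1 - f i (X i ω)).toReal :=
        EReal.coe_le_coe_iff.1 (hvLow.trans hprod)
    _ = K * ∏ i ∈ s, (1 - (SL.E fun ω => f i (X i ω)).toReal) := by
        simp only [SL.toReal_cE_one_sub fun ω => hf _ (X _ ω)]
    _ ≤ K * ∏ i ∈ s, Real.exp (-(SL.E fun ω => f i (X i ω)).toReal) :=
        mul_le_mul_of_nonneg_left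
          (Finset.prod_le_prod (fun i _ => sub_nonneg.2 (hp i)) fun i _ =>
            Real.one_sub_le_exp_neg _)
          (zero_le_one.trans h.one_le)
    _ = K * Real.exp (-∑ i ∈ s, (SL.E fun ω => f i (X i ω)).toReal) := by
        rw [← Finset.sum_neg_distrib, Real.exp_sum]

theorem LENDconj.V_iUnion_ge_eq_one (h : LENDconj SL K X)
    (hLip : ∀ i, LipschitzWith (L i) (f i)) (hmono : ∀ i, Monotone (f i))
    (hf : ∀ i x, f i x ∈ Set.Icc 0 1)
    (hsum : ¬ Summable fun i => (SL.E fun ω => f i (X i ω)).toReal) (n : ℕ) :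
    SL.V (⋃ i ≥ n, {ω | 0 < f i (X i ω)}) = 1 := by
  set U := ⋃ i ≥ n, {ω | 0 < f i (X i ω)}
  set p : ℕ → ℝ := fun i => (SL.E fun ω => f i (X i ω)).toReal
  have hp0 : ∀ i, 0 ≤ p i := fun i => (SL.toReal_E_mem_Icc fun ω => hf i (X i ω)).1
  have hbound : ∀ m, 1 - SL.V U ≤ K * Real.exp (-∑ i ∈ Finset.range m, p (n + i)) := fun m =>
    calc 1 - SL.V U = SL.vLow Uᶜ := by rw [vLow, compl_compl]
      _ ≤ SL.vLow {ω | ∀ i ∈ Finset.Ico n (n + m), f i (X i ω) = 0} :=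
          SL.vLow_mono fun ω hω i hi => le_antisymm
            (not_lt.1 fun hlt => hω (Set.mem_biUnion (Finset.mem_Ico.1 hi).1 hlt))
            (hf i (X i ω)).1
      _ ≤ K * Real.exp (-∑ i ∈ Finset.Ico n (n + m), p i) := h.vLow_le_exp hLip hmono hf _
      _ = K * Real.exp (-∑ i ∈ Finset.range m, p (n + i)) := by
          rw [Finset.sum_Ico_eq_sum_range, Nat.add_sub_cancel_left]
  have hdiv : Tendsto (fun m => ∑ i ∈ Finset.range m, p (n + i)) atTop atTop := by
    refine (not_summable_iff_tendsto_nat_atTop_of_nonneg fun i => hp0 (n + i)).1 ?_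
    simpa only [add_comm n] using (summable_nat_add_iff n).not.2 hsum
  have hlim := (Real.tendsto_exp_neg_atTop_nhds_zero.comp hdiv).const_mul K
  have hle : 1 - SL.V U ≤ K * 0 := ge_of_tendsto' hlim hbound
  linarith [SL.V_le_one U]

theorem LENDconj.V_limsup_eq_one (h : LENDconj SL K X) (hid : IdentDist SL X)
    (hcont : SL.ContinuousCapacity) {c : ℕ → ℝ}
    (hsum : ¬ Summable fun i => SL.V {ω | c i ≤ X 0 ω}) :
    SL.V (limsup (fun i => {ω | c i - 1 < X i ω}) atTop) = 1 := by
  have hsum' : ¬ Summable fun i => (SL.E fun ω => ramp (c i) (X i ω)).toReal := fun hs =>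
    hsum (hs.of_nonneg_of_le (fun _ => SL.V_nonneg _) fun i => hid.V_le_toReal_E_ramp i (c i))
  refine hcont.V_limsup_eq_one fun n => ?_
  simpa only [ramp_pos_iff] using
    h.V_iUnion_ge_eq_one (fun i => lipschitzWith_ramp (c i)) (fun i => monotone_ramp (c i))
      (fun i => ramp_mem_Icc (c i)) hsum' n

theorem LENDconj.V_not_isBigO_eq_one (h : LENDconj SL K X) (hid : IdentDist SL X)
    (hcont : SL.ContinuousCapacity) (htop : SL.Choquet (X 0) = ⊤) :
    SL.V {ω | ¬ (fun n => X n ω) =O[atTop] fun n : ℕ => (n : ℝ)} = 1 := by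
  have hlimsup : ∀ M : ℕ,
      SL.V (limsup (fun i : ℕ => {ω | ((M : ℝ) + 1) * i - 1 < X i ω}) atTop) = 1 := fun M =>
    h.V_limsup_eq_one hid hcont fun hs =>
      SL.Choquet_ne_top_of_summable (by positivity) hs htop
  have hanti : Antitone fun M : ℕ =>
      limsup (fun i : ℕ => {ω | ((M : ℝ) + 1) * i - 1 < X i ω}) atTop := fun M N hMN =>
    limsup_le_limsup (.of_forall fun i ω (hω : _ < X i ω) => lt_of_le_of_lt (by gcongr) hω)
  refine le_antisymm (SL.V_le_one _) ?_
  rw [← hcont.V_iInter_eq_one hanti hlimsup]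
  refine SL.V_mono fun ω hω => not_isBigO_natCast_of_frequently_lt fun M => ?_
  exact mem_limsup_iff_frequently_mem.1 (Set.mem_iInter.1 hω M)

theorem LENDconj.Choquet_ne_top (h : LENDconj SL K X) (hid : IdentDist SL X)
    (hcont : SL.ContinuousCapacity)
    (hlt : SL.V {ω | limsup (fun n : ℕ =>
        ((|∑ k ∈ Finset.range n, X k ω| / n : ℝ) : EReal)) atTop = ⊤} < 1) :
    SL.Choquet (X 0) ≠ ⊤ := fun htop =>
  hlt.not_ge ((h.V_not_isBigO_eq_one hid hcont htop).ge.trans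
    (SL.V_mono fun _ hω => by
      simpa only [Real.norm_eq_abs, Set.mem_ofPred_eq] using limsup_norm_sum_range_div_eq_top hω))

end BorelCantelli

end SublinearExp

/-- Theorem 4.5: converse strong law of large numbers for random variables that
are extended negatively dependent under the conjugate expectation `ℰ`. -/
theorem stmt12 {Ω : Type} (SL : SublinearExp Ω) (X : ℕ → Ω → ℝ)
    (K : ℝ) (hK : 1 ≤ K)
    (hid : SublinearExp.IdentDist SL X)
    (hENDconj : SublinearExp.ENDconj SL K X)
    (hcont : SL.ContinuousCapacity)
    (h : SL.V {ω | limsup (fun n : ℕ =>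
        ((|∑ k ∈ Finset.range n, X k ω| / n : ℝ) : EReal)) atTop = ⊤} < 1) :
    SL.Choquet (fun ω => |X 0 ω|) ≠ ⊤ := by
  have hpos : SL.Choquet (X 0) ≠ ⊤ := hENDconj.2.Choquet_ne_top hid hcont h
  have hneg : SL.Choquet (fun ω => -X 0 ω) ≠ ⊤ :=
    hENDconj.1.neg.Choquet_ne_top hid.neg hcont (by simpa using h)
  exact ne_top_of_le_ne_top (ENNReal.add_ne_top.2 ⟨hpos, hneg⟩) (SL.Choquet_abs_le (X 0))
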